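/- arXiv:1711.08615 — 6 statements merged into one kernel-verified Lean document; each statement's English description precedes it below -/
import Mathlib

section
/- Fix a scenario y ⊆ V × V and a target set A ⊆ V. The reach-count function S ↦ f(S, y, A) is submodular: for all S ⊆ T ⊆ V and all x ∉ T, f(S ∪ {x}, y, A) − f(S, y, A) ≥ f(T ∪ {x}, y, A) − f(T, y, A). -/
/-!
The nodes reached from `insert x U` are those reached from `U` together with those reached
from `x`. Hence the marginal gain of adding `x` to `U` is the number of nodes of `A` reachable
from `x` but not from `U` (`gain`), and this set shrinks as `U` grows (`anti`).
-/

open Finset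

attribute [local instance] Classical.propDecidable

/-- Number of nodes of `A` reachable from seed set `S` in scenario `y` (a set of
directed edges), where a node is reachable if some seed is connected to it by the
reflexive–transitive closure of the edge relation. -/
noncomputable def reachCount {V : Type*} (y : Finset (V × V)) (S A : Finset V) : ℕ :=
  (A.filter (fun v => ∃ s ∈ S, Relation.ReflTransGen (fun a b => (a, b) ∈ y) s v)).card

/-- for a fixed scenario `y` and target set `A`, the reach-count function
`S ↦ f(S, y, A)` is submodular: for all `S ⊆ T` and `x ∉ T`,
`f(S ∪ {x}) − f(S) ≥ f(T ∪ {x}) − f(T)`. -/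
theorem reachCount_submodular {V : Type*} [Fintype V] (y : Finset (V × V)) (A : Finset V)
    (S T : Finset V) (x : V) (hST : S ⊆ T) (hx : x ∉ T) :
    (reachCount y (insert x S) A : ℝ) - (reachCount y S A : ℝ) ≥
      (reachCount y (insert x T) A : ℝ) - (reachCount y T A : ℝ) := by
  -- The marginal gain of `x` counts the nodes of `A` reached by `x` but by no other seed.
  have gain : ∀ U : Finset V, reachCount y (insert x U) A = reachCount y U A +
      (A.filter (fun v => Relation.ReflTransGen (fun a b => (a, b) ∈ y) x v ∧
        ¬ ∃ s ∈ U, Relation.ReflTransGen (fun a b => (a, b) ∈ y) s v)).card := by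
    intro U
    unfold reachCount
    rw [← Finset.card_union_of_disjoint]
    · congr 1
      ext v
      simp only [Finset.mem_filter, Finset.mem_union, Finset.exists_mem_insert]
      generalize (∃ s ∈ U, Relation.ReflTransGen (fun a b => (a, b) ∈ y) s v) = p
      tauto
    · rw [Finset.disjoint_filter]
      exact fun v _ hU hgain => hgain.2 hU
  -- Enlarging the seed set can only shrink this set of newly reached nodes.
  have anti : (A.filter (fun v => Relation.ReflTransGen (fun a b => (a, b) ∈ y) x v ∧
        ¬ ∃ s ∈ T, Relation.ReflTransGen (fun a b => (a, b) ∈ y) s v)).card ≤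
      (A.filter (fun v => Relation.ReflTransGen (fun a b => (a, b) ∈ y) x v ∧
        ¬ ∃ s ∈ S, Relation.ReflTransGen (fun a b => (a, b) ∈ y) s v)).card := by
    apply Finset.card_le_card
    intro v hv
    rw [Finset.mem_filter] at hv ⊢
    exact ⟨hv.1, hv.2.1, fun ⟨s, hs, hr⟩ => hv.2.2 ⟨s, hST hs, hr⟩⟩
  rw [gain S, gain T]
  push_cast
  have anti_real := (Nat.cast_le (α := ℝ)).mpr anti
  linarith
end

section
/- The probability-of-victory objective violates submodularity: let V be a finite type, A ⊆ V, and k ≥ 2 with |A| ≥ k, and define g(S) = 1 if |S ∩ A| ≥ k and g(S) = 0 otherwise (this equals POV(S) in the paper's counterexample of isolated nodes where each seed influences exactly itself and k voters in A must be influenced to win). Then g is not submodular: there exist sets S ⊆ T ⊆ V and an element x ∉ T with g(S ∪ {x}) − g(S) < g(T ∪ {x}) − g(T). -/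
open Finset

attribute [local instance] Classical.propDecidable

/-- the probability-of-victory objective violates submodularity.
With `A ⊆ V`, `k ≥ 2`, `|A| ≥ k`, and `g(S) = 1` if `|S ∩ A| ≥ k` and `0` otherwise
(the POV of seed set `S` in the isolated-nodes counterexample), `g` is not submodular:
there exist `S ⊆ T` and `x ∉ T` with `g(S ∪ {x}) − g(S) < g(T ∪ {x}) − g(T)`. -/
theorem POV_not_submodular {V : Type*} [Fintype V] [DecidableEq V]
    (A : Finset V) (k : ℕ) (hk : 2 ≤ k) (hA : k ≤ A.card)
    (g : Finset V → ℝ)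
    (hg : ∀ S : Finset V, g S = if k ≤ (S ∩ A).card then 1 else 0) :
    ∃ (S T : Finset V) (x : V), S ⊆ T ∧ x ∉ T ∧
      g (insert x S) - g S < g (insert x T) - g T := by
  -- `T ∪ {x}` is a winning set of exactly `k` voters of `A`, so `x` is pivotal for `T`;
  -- since `k ≥ 2`, it is not pivotal for `S = ∅`.
  obtain ⟨B, hBA, hB⟩ := exists_subset_card_eq hA
  obtain ⟨x, hx⟩ : B.Nonempty := card_pos.mp (by omega)
  have hxA : x ∈ A := hBA hx
  have hT : (B.erase x ∩ A).card = k - 1 := by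
    rw [inter_eq_left.mpr ((erase_subset x B).trans hBA), card_erase_of_mem hx, hB]
  have hTx : (insert x (B.erase x) ∩ A).card = k := by
    rw [insert_erase hx, inter_eq_left.mpr hBA, hB]
  have hSx : (insert x (∅ : Finset V) ∩ A).card = 1 := by
    simp [hxA]
  refine ⟨∅, B.erase x, x, empty_subset _, notMem_erase x B, ?_⟩
  rw [hg, hg ∅, hg (insert x (B.erase x)), hg (B.erase x), hT, hTx, hSx, empty_inter, card_empty,
    if_neg (by omega), if_neg (by omega), if_pos le_rfl, if_neg (by omega)]
  norm_num
end

section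
/- (Theorem 3, two-candidate POV bicriteria guarantee) Assume Δ ≥ 1 and let k ∈ ℕ, β a real with β > Δ, and α = Δ/β. Suppose S_β ⊆ V with |S_β| ≤ k satisfies Σ_{y ⊆ E} w(y)·min(β, f(S_β, y, A)) ≥ (1 − 1/e) · Σ_{y ⊆ E} w(y)·min(β, f(S', y, A)) for every S' ⊆ V with |S'| ≤ k (as the greedy algorithm guarantees for the truncated surrogate). Then Σ_{y : f(S_β, y, A) ≥ Δ} w(y) ≥ ((1 − 1/e)·OPT(β) − α)/(1 − α), where OPT(t) = max over S' ⊆ V with |S'| ≤ k of Σ_{y : f(S', y, A) ≥ t} w(y). In particular, the output of POVConstructive (the best S_β over all β) achieves probability of victory at least max_{0 < α < 1} ((1 − 1/e)·OPT(Δ/α) − α)/(1 − α). -/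
/-!
Write `P` for the probability that `Sβ` reaches at least `Δ` voters of `A`. Splitting on that event,
and using that the scenario weights sum to `1` (`sum_sceneWeight`), the expected truncated influence
of `Sβ` is at most `β P + Δ (1 - P)` (`surrogate_le`). Conversely the expected truncated influence
of a seed set attaining `OPT(β)` is at least `β * OPT(β)` (`mul_prob_le_surrogate`). The
approximation hypothesis chains these into `(1 - 1/e) β OPT(β) ≤ β P + Δ (1 - P)`; dividing by `β`
and solving for `P` gives the bound.
-/

open Finset

attribute [local instance] Classical.propDecidable

/-- Probability of the live-graph scenario `y ⊆ E` under edge probabilities `p`. -/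
noncomputable def sceneWeight {V : Type*} (E : Finset (V × V)) (p : V × V → ℝ)
    (y : Finset (V × V)) : ℝ :=
  (∏ e ∈ y, p e) * (∏ e ∈ E \ y, (1 - p e))

/-- `OPT(t)`: the maximum, over seed sets `S'` of size at most `k`, of the probability
that at least `t` voters of `A` are reached. -/
noncomputable def OPTpov {V : Type*} [Fintype V] (E : Finset (V × V)) (p : V × V → ℝ)
    (A : Finset V) (k : ℕ) (t : ℝ) : ℝ :=
  (Finset.univ.powerset.filter (fun S : Finset V => S.card ≤ k)).sup' ⟨∅, by simp⟩
    (fun S => ∑ y ∈ E.powerset.filter (fun y => t ≤ (reachCount y S A : ℝ)),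
      sceneWeight E p y)

/-- The scenario weights form a probability distribution: expand `∏ e ∈ E, (p e + (1 - p e))`. -/
lemma sum_sceneWeight {V : Type*} (E : Finset (V × V)) (p : V × V → ℝ) :
    ∑ y ∈ E.powerset, sceneWeight E p y = 1 := by
  have h := Finset.prod_add p (fun e => 1 - p e) E
  simp only [add_sub_cancel, Finset.prod_const_one] at h
  rw [h]
  refine Finset.sum_congr rfl fun y _ => ?_
  unfold sceneWeight
  congr!

lemma sceneWeight_nonneg {V : Type*} {E : Finset (V × V)} {p : V × V → ℝ}
    (hp : ∀ e ∈ E, 0 ≤ p e ∧ p e ≤ 1) {y : Finset (V × V)} (hy : y ∈ E.powerset) :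
    0 ≤ sceneWeight E p y := by
  rw [Finset.mem_powerset] at hy
  refine mul_nonneg (Finset.prod_nonneg fun e he => (hp e (hy he)).1)
    (Finset.prod_nonneg fun e he => ?_)
  linarith [(hp e (Finset.mem_sdiff.1 he).1).2]

/-- Markov-type lower bound: the truncated surrogate is at least `β` on the event that `β` voters
are reached, and nonnegative elsewhere. -/
lemma mul_prob_le_surrogate {V : Type*} {E : Finset (V × V)} {p : V × V → ℝ}
    (hp : ∀ e ∈ E, 0 ≤ p e ∧ p e ≤ 1) (S A : Finset V) {β : ℝ} (hβ : 0 ≤ β) :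
    β * ∑ y ∈ E.powerset.filter (fun y => β ≤ (reachCount y S A : ℝ)), sceneWeight E p y ≤
      ∑ y ∈ E.powerset, sceneWeight E p y * min β (reachCount y S A : ℝ) := by
  rw [Finset.sum_filter, Finset.mul_sum]
  refine Finset.sum_le_sum fun y hy => ?_
  have hw := sceneWeight_nonneg hp hy
  split_ifs with h
  · rw [min_eq_left h, mul_comm]
  · rw [mul_zero]
    exact mul_nonneg hw (le_min hβ (Nat.cast_nonneg _))

/-- The truncated surrogate is at most `β` on the event that `Δ` voters are reached, and at most
`Δ` on its complement. -/
lemma surrogate_le {V : Type*} {E : Finset (V × V)} {p : V × V → ℝ}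
    (hp : ∀ e ∈ E, 0 ≤ p e ∧ p e ≤ 1) (S A : Finset V) (Δ β : ℝ) :
    ∑ y ∈ E.powerset, sceneWeight E p y * min β (reachCount y S A : ℝ) ≤
      Δ + (β - Δ) *
        ∑ y ∈ E.powerset.filter (fun y => Δ ≤ (reachCount y S A : ℝ)), sceneWeight E p y := by
  calc ∑ y ∈ E.powerset, sceneWeight E p y * min β (reachCount y S A : ℝ)
      ≤ ∑ y ∈ E.powerset, (Δ * sceneWeight E p y +
          (β - Δ) * if Δ ≤ (reachCount y S A : ℝ) then sceneWeight E p y else 0) := by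
        refine Finset.sum_le_sum fun y hy => ?_
        have hw := sceneWeight_nonneg hp hy
        split_ifs with h
        · have := mul_le_mul_of_nonneg_left (min_le_left β (reachCount y S A : ℝ)) hw
          linarith
        · have := mul_le_mul_of_nonneg_left
            ((min_le_right β (reachCount y S A : ℝ)).trans (not_le.1 h).le) hw
          linarith
    _ = _ := by
        rw [Finset.sum_add_distrib, ← Finset.mul_sum, ← Finset.mul_sum, sum_sceneWeight,
          Finset.sum_filter, mul_one]

/-- Theorem 3, two-candidate POV bicriteria guarantee: if `Δ ≥ 1`,
`β > Δ`, `α = Δ/β`, and `S_β` (of size at most `k`) is a `(1 − 1/e)`-approximate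
maximizer of the truncated surrogate `Σ_y w(y)·min(β, f(S, y, A))`, then the
probability that `S_β` reaches at least `Δ` voters of `A` is at least
`((1 − 1/e)·OPT(β) − α)/(1 − α)`.  Here `A` is the set of voters ranking `c*` second
and `Δ = (|A| − (|V| − |A|))/2 + 1`. -/
theorem pov_two_candidate_bicriteria {V : Type*} [Fintype V]
    (E : Finset (V × V)) (p : V × V → ℝ) (hp : ∀ e ∈ E, 0 ≤ p e ∧ p e ≤ 1)
    (A : Finset V) (k : ℕ) (Δ β α : ℝ)
    (hΔdef : Δ = ((A.card : ℝ) - ((Fintype.card V : ℝ) - (A.card : ℝ))) / 2 + 1)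
    (hΔ : 1 ≤ Δ) (hβ : Δ < β) (hα : α = Δ / β)
    (Sβ : Finset V) (hSβ : Sβ.card ≤ k)
    (hgreedy : ∀ S' : Finset V, S'.card ≤ k →
      (1 - 1 / Real.exp 1) *
          ∑ y ∈ E.powerset, sceneWeight E p y * min β (reachCount y S' A : ℝ) ≤
        ∑ y ∈ E.powerset, sceneWeight E p y * min β (reachCount y Sβ A : ℝ)) :
    ((1 - 1 / Real.exp 1) * OPTpov E p A k β - α) / (1 - α) ≤
      ∑ y ∈ E.powerset.filter (fun y => Δ ≤ (reachCount y Sβ A : ℝ)),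
        sceneWeight E p y := by
  have hβ0 : 0 < β := by linarith
  have hα1 : α < 1 := by rw [hα, div_lt_one hβ0]; exact hβ
  have hΔα : Δ = α * β := by rw [hα]; field_simp
  have hc : 0 ≤ 1 - 1 / Real.exp 1 := by
    rw [sub_nonneg, div_le_one (Real.exp_pos 1)]
    exact Real.one_le_exp zero_le_one
  obtain ⟨S', hS', hopt⟩ := Finset.exists_mem_eq_sup'
    (s := Finset.univ.powerset.filter (fun S : Finset V => S.card ≤ k)) ⟨∅, by simp⟩
    (fun S => ∑ y ∈ E.powerset.filter (fun y => β ≤ (reachCount y S A : ℝ)), sceneWeight E p y)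
  have hlow : β * OPTpov E p A k β ≤
      ∑ y ∈ E.powerset, sceneWeight E p y * min β (reachCount y S' A : ℝ) := by
    unfold OPTpov
    rw [hopt]
    exact mul_prob_le_surrogate hp S' A hβ0.le
  have hchain := ((mul_le_mul_of_nonneg_left hlow hc).trans
    (hgreedy S' (Finset.mem_filter.1 hS').2)).trans (surrogate_le hp Sβ A Δ β)
  rw [div_le_iff₀ (by linarith)]
  refine le_of_mul_le_mul_left ?_ hβ0
  generalize (∑ y ∈ E.powerset.filter (fun y => Δ ≤ (reachCount y Sβ A : ℝ)),
    sceneWeight E p y) = P at hchain ⊢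
  rw [hΔα] at hchain
  linarith
end

section
/- (Generalization of Theorem 3: probability that a stochastic nonnegative set function exceeds a threshold) Let V be a finite type, Y a finite type of scenarios, w : Y → ℝ with w(y) ≥ 0 and Σ_y w(y) = 1, and g : Finset V → Y → ℝ with g(S, y) ≥ 0 for all S, y. Let Δ > 0 and β > Δ be reals, α = Δ/β, and k ∈ ℕ. If S_β ⊆ V with |S_β| ≤ k satisfies Σ_y w(y)·min(β, g(S_β, y)) ≥ (1 − 1/e) · Σ_y w(y)·min(β, g(S', y)) for every S' ⊆ V with |S'| ≤ k, then Σ_{y : g(S_β, y) ≥ Δ} w(y) ≥ ((1 − 1/e) · OPT(β) − α)/(1 − α), where OPT(t) = max over S' ⊆ V with |S'| ≤ k of Σ_{y : g(S', y) ≥ t} w(y). -/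
/-!
The truncated surrogate `F(S) = ∑ y, w y * min β (g S y)` is compared with the threshold
probabilities from both sides: `β * P(g S ≥ β) ≤ F(S)` (`mul_sum_filter_le_truncated`) and
`F(S) ≤ Δ + (β - Δ) * P(g S ≥ Δ)` (`truncated_le_add_mul_sum_filter`). Applying the first bound
to a set attaining `OPT(β)`, the second to `Sβ`, and joining them by the approximation hypothesis
gives `(1 - 1/e) * β * OPT(β) ≤ Δ + (β - Δ) * P(g Sβ ≥ Δ)`; dividing by `β` is the claim.
-/

open Finset

attribute [local instance] Classical.propDecidable

/-- Markov-type lower bound: a scenario with `β ≤ f y` contributes the full `β * w y` to the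
truncated sum, and the other scenarios contribute nonnegatively. -/
lemma mul_sum_filter_le_truncated {Y : Type*} [Fintype Y] (w f : Y → ℝ) (hw : ∀ y, 0 ≤ w y)
    (hf : ∀ y, 0 ≤ f y) (β : ℝ) (hβ : 0 ≤ β) :
    β * ∑ y ∈ Finset.univ.filter (fun y => β ≤ f y), w y ≤ ∑ y, w y * min β (f y) := by
  rw [Finset.sum_filter, Finset.mul_sum]
  refine Finset.sum_le_sum fun y _ => ?_
  split_ifs with h
  · rw [min_eq_left h, mul_comm]
  · rw [mul_zero]
    exact mul_nonneg (hw y) (le_min hβ (hf y))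

/-- Converse upper bound: the truncated value is at most `β` where `Δ ≤ f y` and at most `Δ`
elsewhere. -/
lemma truncated_le_add_mul_sum_filter {Y : Type*} [Fintype Y] (w f : Y → ℝ)
    (hw : ∀ y, 0 ≤ w y) (hw1 : ∑ y, w y = 1) (Δ β : ℝ) :
    ∑ y, w y * min β (f y) ≤
      Δ + (β - Δ) * ∑ y ∈ Finset.univ.filter (fun y => Δ ≤ f y), w y := by
  have hsplit : Δ + (β - Δ) * ∑ y ∈ Finset.univ.filter (fun y => Δ ≤ f y), w y =
      ∑ y, (Δ * w y + (β - Δ) * if Δ ≤ f y then w y else 0) := by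
    rw [Finset.sum_add_distrib, ← Finset.mul_sum, ← Finset.mul_sum, hw1, mul_one,
      Finset.sum_filter]
  rw [hsplit]
  refine Finset.sum_le_sum fun y _ => ?_
  split_ifs with h
  · nlinarith [mul_le_mul_of_nonneg_left (min_le_left β (f y)) (hw y)]
  · nlinarith [mul_le_mul_of_nonneg_left ((min_le_right β (f y)).trans (not_le.mp h).le) (hw y)]

/-- generalization of Theorem 3: let `w` be a probability weighting over
a finite scenario type `Y` and `g(S, y) ≥ 0` a stochastic set function on ground set
`V`.  If `Δ > 0`, `β > Δ`, `α = Δ/β`, and `S_β` (of size at most `k`) is a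
`(1 − 1/e)`-approximate maximizer of the truncated surrogate
`Σ_y w(y)·min(β, g(S, y))` among sets of size at most `k`, then
`Σ_{y : g(S_β, y) ≥ Δ} w(y) ≥ ((1 − 1/e)·OPT(β) − α)/(1 − α)`, where
`OPT(t) = max_{|S'| ≤ k} Σ_{y : g(S', y) ≥ t} w(y)`. -/
theorem prob_threshold_bicriteria {V Y : Type*} [Fintype V] [Fintype Y]
    (w : Y → ℝ) (hw : ∀ y, 0 ≤ w y) (hw1 : ∑ y, w y = 1)
    (g : Finset V → Y → ℝ) (hg : ∀ S y, 0 ≤ g S y)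
    (Δ β α : ℝ) (hΔ : 0 < Δ) (hβ : Δ < β) (hα : α = Δ / β) (k : ℕ)
    (Sβ : Finset V) (hSβ : Sβ.card ≤ k)
    (hgreedy : ∀ S' : Finset V, S'.card ≤ k →
      (1 - 1 / Real.exp 1) * ∑ y, w y * min β (g S' y) ≤
        ∑ y, w y * min β (g Sβ y)) :
    ((1 - 1 / Real.exp 1) *
        ((Finset.univ.powerset.filter (fun S : Finset V => S.card ≤ k)).sup' ⟨∅, by simp⟩
          (fun S => ∑ y ∈ Finset.univ.filter (fun y => β ≤ g S y), w y)) - α) / (1 - α) ≤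
      ∑ y ∈ Finset.univ.filter (fun y => Δ ≤ g Sβ y), w y := by
  obtain ⟨S, hS, hmax⟩ := Finset.exists_mem_eq_sup'
    (s := Finset.univ.powerset.filter (fun S : Finset V => S.card ≤ k)) ⟨∅, by simp⟩
    (fun S => ∑ y ∈ Finset.univ.filter (fun y => β ≤ g S y), w y)
  rw [hmax]
  have hβ0 : 0 < β := hΔ.trans hβ
  have hα1 : α < 1 := by rw [hα]; exact (div_lt_one hβ0).mpr hβ
  have hαβ : α * β = Δ := by rw [hα]; exact div_mul_cancel₀ Δ hβ0.ne'
  have hc : 0 ≤ 1 - 1 / Real.exp 1 :=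
    sub_nonneg.mpr ((div_le_one (Real.exp_pos 1)).mpr (Real.one_le_exp zero_le_one))
  have hlow := mul_le_mul_of_nonneg_left
    (mul_sum_filter_le_truncated w (g S) hw (hg S) β hβ0.le) hc
  have hchain := (hlow.trans (hgreedy S (Finset.mem_filter.mp hS).2)).trans
    (truncated_le_add_mul_sum_filter w (g Sβ) hw hw1 Δ β)
  rw [div_le_iff₀ (sub_pos.mpr hα1)]
  refine le_of_mul_le_mul_right ?_ hβ0
  rw [← hαβ] at hchain ⊢
  linarith
end

section
/- (Pointwise comparison lemma used in the proof of Theorem 7) For all seed sets S, T ⊆ V and every scenario y ⊆ E, the constructive change in margin satisfies m_C(S, y) ≤ m_C(T, y) + 2·f(S, y, A). -/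
/-!
Let `c` attain the minimum in `m_C(T, y)`. The term of `m_C(S, y)` at `c` differs from that of
`m_C(T, y)` by `f(S, y, A ∩ B_c) - f(T, y, A ∩ B_c)`, since the vote-count part does not depend
on the seed set. This is at most `f(S, y, A)`, because `f` is monotone in its target set and
nonnegative; the leading terms contribute at most another `f(S, y, A)`.
-/

open Finset

attribute [local instance] Classical.propDecidable

/-- Voters whose second choice is `c`. -/
noncomputable def secondFor {V C : Type*} [Fintype V] (π₂ : V → C) (c : C) : Finset V :=
  Finset.univ.filter (fun v => π₂ v = c)

/-- Voters whose first choice is `c`. -/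
noncomputable def firstFor {V C : Type*} [Fintype V] (π₁ : V → C) (c : C) : Finset V :=
  Finset.univ.filter (fun v => π₁ v = c)

/-- Constructive change in margin in scenario `y` under seed set `S`:
`m_C(S, y) = f(S, y, A) + min_{c ∈ J} ( f(S, y, A ∩ B_c) + max_{c' ∈ J} |B_{c'}| − |B_c| )`,
where `A = {v : π₂ v = c*}` and `B_c = {v : π₁ v = c}`. -/
noncomputable def mC {V C : Type*} [Fintype V] (J : Finset C) (hJ : J.Nonempty)
    (π₁ π₂ : V → C) (cstar : C) (S : Finset V) (y : Finset (V × V)) : ℝ :=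
  (reachCount y S (secondFor π₂ cstar) : ℝ) +
    J.inf' hJ (fun c =>
      (reachCount y S (secondFor π₂ cstar ∩ firstFor π₁ c) : ℝ) +
        J.sup' hJ (fun c' => ((firstFor π₁ c').card : ℝ)) - ((firstFor π₁ c).card : ℝ))

/-- pointwise comparison lemma used in the proof of Theorem 7: for all
seed sets `S, T` and every scenario `y ⊆ E`,
`m_C(S, y) ≤ m_C(T, y) + 2·f(S, y, A)` where `A = {v : π₂ v = c*}`. -/
theorem mC_pointwise_comparison {V C : Type*} [Fintype V]
    (E : Finset (V × V))
    (J : Finset C) (hJ : J.Nonempty) (π₁ π₂ : V → C) (cstar : C)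
    (hdist : ∀ v, π₁ v ≠ π₂ v)
    (S T : Finset V) (y : Finset (V × V)) (hy : y ⊆ E) :
    mC J hJ π₁ π₂ cstar S y ≤
      mC J hJ π₁ π₂ cstar T y + 2 * (reachCount y S (secondFor π₂ cstar) : ℝ) := by
  unfold mC
  -- Evaluate the minimum for `S` at a candidate `c` attaining the minimum for `T`.
  obtain ⟨c, hc, hmin⟩ := Finset.exists_mem_eq_inf' hJ (fun c =>
      (reachCount y T (secondFor π₂ cstar ∩ firstFor π₁ c) : ℝ) +
        J.sup' hJ (fun c' => ((firstFor π₁ c').card : ℝ)) - ((firstFor π₁ c).card : ℝ))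
  have hle := Finset.inf'_le (fun c =>
      (reachCount y S (secondFor π₂ cstar ∩ firstFor π₁ c) : ℝ) +
        J.sup' hJ (fun c' => ((firstFor π₁ c').card : ℝ)) - ((firstFor π₁ c).card : ℝ)) hc
  have hmono : (reachCount y S (secondFor π₂ cstar ∩ firstFor π₁ c) : ℝ) ≤
      reachCount y S (secondFor π₂ cstar) := by
    unfold reachCount
    exact_mod_cast Finset.card_le_card
      (Finset.filter_subset_filter _ Finset.inter_subset_left)
  have h₁ : (0 : ℝ) ≤ reachCount y T (secondFor π₂ cstar) := Nat.cast_nonneg _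
  have h₂ : (0 : ℝ) ≤ reachCount y T (secondFor π₂ cstar ∩ firstFor π₁ c) :=
    Nat.cast_nonneg _
  rw [hmin]
  linarith
end

section
/- (Pointwise comparison lemma used in the proof of Theorem 8) For all seed sets S, T ⊆ V and every scenario y ⊆ E, the destructive change in margin satisfies m_D(S, y) ≤ m_D(T, y) + 2·f(S, y, A'). -/
/-!
For each `c ∈ J`, the term `f(S, y, A' ∩ C_c) + |B_c| - max |B|` exceeds the corresponding term for
`T` by at most `f(S, y, A' ∩ C_c) ≤ f(S, y, A')`, since `f(T, y, ·) ≥ 0`; hence so do the maxima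
over `J`. The second copy of `f(S, y, A')` pays for the leading summand of `m_D(S, y)`, the
leading summand of `m_D(T, y)` being nonnegative.
-/

open Finset

attribute [local instance] Classical.propDecidable

/-- Destructive change in margin in scenario `y` under seed set `S`:
`m_D(S, y) = f(S, y, A') + max_{c ∈ J} ( f(S, y, A' ∩ C_c) + |B_c| − max_{c' ∈ J} |B_{c'}| )`,
where `A' = {v : π₁ v = c*}`, `B_c = {v : π₁ v = c}` and `C_c = {v : π₂ v = c}`. -/
noncomputable def mD {V C : Type*} [Fintype V] (J : Finset C) (hJ : J.Nonempty)
    (π₁ π₂ : V → C) (cstar : C) (S : Finset V) (y : Finset (V × V)) : ℝ :=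
  (reachCount y S (firstFor π₁ cstar) : ℝ) +
    J.sup' hJ (fun c =>
      (reachCount y S (firstFor π₁ cstar ∩ secondFor π₂ c) : ℝ) +
        ((firstFor π₁ c).card : ℝ) - J.sup' hJ (fun c' => ((firstFor π₁ c').card : ℝ)))

/-- pointwise comparison lemma used in the proof of Theorem 8: for all
seed sets `S, T` and every scenario `y ⊆ E`,
`m_D(S, y) ≤ m_D(T, y) + 2·f(S, y, A')` where `A' = {v : π₁ v = c*}`. -/
theorem mD_pointwise_comparison {V C : Type*} [Fintype V]
    (E : Finset (V × V))
    (J : Finset C) (hJ : J.Nonempty) (π₁ π₂ : V → C) (cstar : C)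
    (hdist : ∀ v, π₁ v ≠ π₂ v)
    (S T : Finset V) (y : Finset (V × V)) (hy : y ⊆ E) :
    mD J hJ π₁ π₂ cstar S y ≤
      mD J hJ π₁ π₂ cstar T y + 2 * (reachCount y S (firstFor π₁ cstar) : ℝ) := by
  have hmono : ∀ c, (reachCount y S (firstFor π₁ cstar ∩ secondFor π₂ c) : ℝ) ≤
      reachCount y S (firstFor π₁ cstar) := fun c =>
    Nat.cast_le.mpr (Finset.card_le_card (Finset.filter_subset_filter _ Finset.inter_subset_left))
  unfold mD
  set M := J.sup' hJ (fun c' => ((firstFor π₁ c').card : ℝ))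
  have hT : (0 : ℝ) ≤ reachCount y T (firstFor π₁ cstar) := Nat.cast_nonneg _
  -- Passing from `T` to `S` costs at most `f(S, y, A')` in each term of the maximum over `J`.
  have hsup : J.sup' hJ (fun c => (reachCount y S (firstFor π₁ cstar ∩ secondFor π₂ c) : ℝ) +
        ((firstFor π₁ c).card : ℝ) - M) ≤
      J.sup' hJ (fun c => (reachCount y T (firstFor π₁ cstar ∩ secondFor π₂ c) : ℝ) +
        ((firstFor π₁ c).card : ℝ) - M) + reachCount y S (firstFor π₁ cstar) := by
    refine Finset.sup'_le hJ _ fun c hc => ?_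
    have h := Finset.le_sup' (fun c => (reachCount y T (firstFor π₁ cstar ∩ secondFor π₂ c) : ℝ) +
        ((firstFor π₁ c).card : ℝ) - M) hc
    have h0 : (0 : ℝ) ≤ reachCount y T (firstFor π₁ cstar ∩ secondFor π₂ c) := Nat.cast_nonneg _
    have hS := hmono c
    linarith
  linarith
end
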